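/- arXiv:math/9709208 — 4 statements merged into one kernel-verified Lean document; each statement's English description precedes it below -/
import Mathlib

section
/- Let T be a compact operator on an infinite-dimensional complex Hilbert space H, let λ be a nonzero element of σ(T), let E_λ(T) = ⋃_{n≥1} ker(λ - T)^n, and let P_λ be the orthogonal projection onto E_λ(T). Then the spectrum of (1 - P_λ) T (1 - P_λ) equals σ(T) \ {λ}. -/
/-!
Write `E` for the algebraic eigenspace of `T` at `l`, `Q = 1 - P` and `S = Q T Q`. Both `T` and `S`
are compact on an infinite-dimensional space, so `0` lies in both spectra, and by the Fredholm
alternative (`IsCompactOperator.hasEigenvalue_iff_mem_spectrum`) it remains to compare nonzero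
eigenvalues. As `Q` is a projection with kernel `E` and `E` is `T`-invariant, `Q T Q = Q T`. Hence:

* If `S x = l x`, then `x = Q x` and `(l - T) x ∈ E`, so `x ∈ E` by the definition of `E`
  (`algEigenspace_of_sub_mem`) and `x = Q x = 0`. So `l` is not an eigenvalue of `S`.
* If `T x = m x` with `m ≠ l` and `x ≠ 0`, then `S (Q x) = m Q x`, and `Q x ≠ 0` because `T - m` is
  injective on `E` (`algEigenspace_eq_zero_of_eigen`).
* If `S x = m x` with `m ≠ l`, `m ≠ 0` and `x ≠ 0`, then `x = Q x` and `T x - m x ∈ E`. As `T - m`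
  maps `E` onto `E` (`algEigenspace_exists_preimage`), there is `z ∈ E` with
  `T z - m z = T x - m x`; then `x - z` is an eigenvector of `T` for `m`, nonzero since `x ∉ E`.
-/

/-- The algebraic (generalized) eigenspace `⋃_{n≥1} ker (λ - T)^n` of an operator. -/
def algEigenspace {H : Type*} [NormedAddCommGroup H] [InnerProductSpace ℂ H]
    (T : H →L[ℂ] H) (l : ℂ) : Submodule ℂ H :=
  ⨆ n : ℕ, LinearMap.ker ((l • (1 : Module.End ℂ H) - (T : H →ₗ[ℂ] H)) ^ n)

section

variable {H : Type*} [NormedAddCommGroup H] [InnerProductSpace ℂ H] {T : H →L[ℂ] H} {l : ℂ}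

lemma mem_algEigenspace {x : H} :
    x ∈ algEigenspace T l ↔
      ∃ n : ℕ, ((l • (1 : Module.End ℂ H) - (T : H →ₗ[ℂ] H)) ^ n) x = 0 := by
  have hmono : Monotone fun n : ℕ =>
      LinearMap.ker ((l • (1 : Module.End ℂ H) - (T : H →ₗ[ℂ] H)) ^ n) := by
    refine monotone_nat_of_le_succ fun n y hy => ?_
    rw [LinearMap.mem_ker] at hy ⊢
    rw [pow_succ', Module.End.mul_apply, hy, map_zero]
  rw [algEigenspace, Submodule.mem_iSup_of_directed _ hmono.directed_le]
  simp only [LinearMap.mem_ker]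

lemma algEigenspace_pow_succ_apply (n : ℕ) (x : H) :
    ((l • (1 : Module.End ℂ H) - (T : H →ₗ[ℂ] H)) ^ (n + 1)) x =
      ((l • (1 : Module.End ℂ H) - (T : H →ₗ[ℂ] H)) ^ n) (l • x - T x) := by
  rw [pow_succ, Module.End.mul_apply]
  simp

lemma algEigenspace_of_sub_mem {x : H} (h : l • x - T x ∈ algEigenspace T l) :
    x ∈ algEigenspace T l := by
  obtain ⟨n, hn⟩ := mem_algEigenspace.1 h
  exact mem_algEigenspace.2 ⟨n + 1, by rw [algEigenspace_pow_succ_apply, hn]⟩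

lemma algEigenspace_map_mem {x : H} (h : x ∈ algEigenspace T l) : T x ∈ algEigenspace T l := by
  have hsub : l • x - T x ∈ algEigenspace T l := by
    obtain ⟨n, hn⟩ := mem_algEigenspace.1 h
    refine mem_algEigenspace.2 ⟨n, ?_⟩
    rw [← algEigenspace_pow_succ_apply, pow_succ', Module.End.mul_apply, hn, map_zero]
  simpa using Submodule.sub_mem _ (Submodule.smul_mem _ l h) hsub

/-- `T - m` is injective on the algebraic eigenspace of `l ≠ m`: on an eigenvector for `m`, the
operator `(l - T) ^ n` acts as the nonzero scalar `(l - m) ^ n`. -/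
lemma algEigenspace_eq_zero_of_eigen {m : ℂ} (hm : m ≠ l) {x : H} (hx : T x = m • x)
    (h : x ∈ algEigenspace T l) : x = 0 := by
  obtain ⟨n, hn⟩ := mem_algEigenspace.1 h
  induction n with
  | zero => simpa using hn
  | succ n ih =>
    rw [algEigenspace_pow_succ_apply, hx, ← sub_smul, map_smul, smul_eq_zero] at hn
    exact ih (hn.resolve_left (sub_ne_zero.2 hm.symm))

/-- `T - m` maps the algebraic eigenspace of `l ≠ m` onto itself. -/
lemma algEigenspace_exists_preimage {m : ℂ} (hm : m ≠ l) {y : H} (h : y ∈ algEigenspace T l) :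
    ∃ z ∈ algEigenspace T l, T z - m • z = y := by
  obtain ⟨n, hn⟩ := mem_algEigenspace.1 h
  induction n generalizing y with
  | zero =>
    have hy : y = 0 := by simpa using hn
    exact ⟨0, Submodule.zero_mem _, by simp [hy]⟩
  | succ n ih =>
    rw [algEigenspace_pow_succ_apply] at hn
    obtain ⟨z, hz, hzy⟩ := ih (mem_algEigenspace.2 ⟨n, hn⟩) hn
    -- With `(T - m) z = (l - T) y`, one has `(T - m) (y + z) = (l - m) y`.
    refine ⟨(l - m)⁻¹ • (y + z), Submodule.smul_mem _ _ (Submodule.add_mem _ h hz), ?_⟩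
    have key : T (y + z) - m • (y + z) = (l - m) • y := by
      rw [map_add]
      linear_combination (norm := module) hzy
    rw [map_smul, smul_comm m, ← smul_sub, key, inv_smul_smul₀ (sub_ne_zero.2 hm.symm)]

lemma zero_mem_spectrum_of_isCompactOperator [CompleteSpace H] (hH : ¬ FiniteDimensional ℂ H)
    (hT : IsCompactOperator T) : (0 : ℂ) ∈ spectrum ℂ T := by
  rw [spectrum.zero_mem_iff]
  rintro ⟨u, hu⟩
  -- A compact invertible operator makes the identity `T⁻¹ T` compact.
  apply hH
  apply FiniteDimensional.of_isCompactOperator_id (𝕜 := ℂ)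
  have h := hT.clm_comp (↑u⁻¹ : H →L[ℂ] H)
  have hid : ((↑u⁻¹ : H →L[ℂ] H) : H → H) ∘ T = id := by
    funext x
    have := congrArg (fun A : H →L[ℂ] H => A x) u.inv_mul
    simpa [hu] using this
  rwa [hid] at h

lemma hasEigenvalue_iff_exists_ne_zero {m : ℂ} :
    Module.End.HasEigenvalue (T : Module.End ℂ H) m ↔ ∃ x : H, x ≠ 0 ∧ T x = m • x := by
  constructor
  · intro h
    obtain ⟨x, hx⟩ := h.exists_hasEigenvector
    exact ⟨x, hx.2, hx.apply_eq_smul⟩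
  · rintro ⟨x, hx0, hx⟩
    exact Module.End.hasEigenvalue_of_hasEigenvector
      ⟨Module.End.mem_eigenspace_iff.2 hx, hx0⟩

end

/-- If `T` is compact on an infinite-dimensional Hilbert space, `0 ≠ λ ∈ σ(T)` and `P_λ`
is the orthogonal projection onto `E_λ(T)`, then
`σ((1-P_λ) T (1-P_λ)) = σ(T) \ {λ}`. -/
theorem stmt4 {H : Type*} [NormedAddCommGroup H] [InnerProductSpace ℂ H] [CompleteSpace H]
    (hH : ¬ FiniteDimensional ℂ H)
    (T : H →L[ℂ] H) (hT : IsCompactOperator T)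
    (l : ℂ) (hl : l ∈ spectrum ℂ T) (hl0 : l ≠ 0)
    (P : H →L[ℂ] H) (hPsa : IsSelfAdjoint P) (hPidem : P * P = P)
    (hPrange : LinearMap.range (P : H →ₗ[ℂ] H) = algEigenspace T l) :
    spectrum ℂ ((1 - P) * T * (1 - P)) = spectrum ℂ T \ {l} := by
  have hPP (x : H) : P (P x) = P x := congrArg (fun A : H →L[ℂ] H => A x) hPidem
  have hPmem (x : H) : P x ∈ algEigenspace T l := hPrange ▸ ⟨x, rfl⟩
  have hPfix {x : H} (hx : x ∈ algEigenspace T l) : P x = x := by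
    rw [← hPrange] at hx
    obtain ⟨y, rfl⟩ := hx
    exact hPP y
  have hS : IsCompactOperator ((1 - P) * T * (1 - P) : H →L[ℂ] H) := by
    convert (hT.clm_comp (1 - P)).comp_clm (1 - P) using 1 <;> rfl
  -- Since `T` preserves `range P`, the compression is `(1 - P) T`.
  have hSapp (x : H) : ((1 - P) * T * (1 - P)) x = T x - P (T x) := by
    have := hPfix (algEigenspace_map_mem (hPmem x))
    simp [this]
  -- An eigenvector of the compression for `m ≠ 0` lies in its range, hence in `ker P`.
  have hSeig {m : ℂ} (hm0 : m ≠ 0) {x : H} (hx : T x - P (T x) = m • x) : P x = 0 := by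
    have h := congrArg P hx
    rw [map_sub, hPP, sub_self, map_smul] at h
    exact (smul_eq_zero.1 h.symm).resolve_left hm0
  ext m
  rw [Set.mem_sdiff, Set.mem_singleton_iff]
  by_cases hm0 : m = 0
  · subst hm0
    exact iff_of_true (zero_mem_spectrum_of_isCompactOperator hH hS)
      ⟨zero_mem_spectrum_of_isCompactOperator hH hT, hl0.symm⟩
  rw [← hS.hasEigenvalue_iff_mem_spectrum hm0, ← hT.hasEigenvalue_iff_mem_spectrum hm0,
    hasEigenvalue_iff_exists_ne_zero, hasEigenvalue_iff_exists_ne_zero]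
  simp only [hSapp]
  constructor
  · rintro ⟨x, hx0, hx⟩
    have hPx := hSeig hm0 hx
    have hxE : x ∉ algEigenspace T l := fun h => hx0 (by rw [← hPfix h, hPx])
    have hmem : T x - m • x ∈ algEigenspace T l := by
      rw [← hx, sub_sub_cancel]
      exact hPmem _
    have hml : m ≠ l := by
      rintro rfl
      exact hxE (algEigenspace_of_sub_mem (by simpa using Submodule.neg_mem _ hmem))
    obtain ⟨z, hz, hzx⟩ := algEigenspace_exists_preimage hml hmem
    refine ⟨⟨x - z, fun h => hxE (by rwa [sub_eq_zero.1 h]), ?_⟩, hml⟩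
    rw [map_sub]
    linear_combination (norm := module) -hzx
  · rintro ⟨⟨x, hx0, hx⟩, hml⟩
    refine ⟨x - P x, fun h => hx0 ?_, ?_⟩
    · exact algEigenspace_eq_zero_of_eigen hml hx (by rw [sub_eq_zero.1 h]; exact hPmem x)
    · rw [map_sub, map_sub, hPfix (algEigenspace_map_mem (hPmem x)), hx, map_smul]
      module
end

section
/- Let T be a compact operator on an infinite-dimensional complex Hilbert space H and let P be the orthogonal projection onto the closed span of all algebraic eigenspaces E_λ(T) for λ ∈ σ(T) \ {0}. Then (1 - P) T (1 - P) is quasi-nilpotent. -/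
/-- A compact operator has finite ascent at every `μ ≠ 0`. Otherwise there are unit vectors
`f n ∈ ker (μ - T)^(n+1)` orthogonal to `ker (μ - T)^n`, and the `T (f n)` stay at distance at
least `‖μ‖` from each other. -/
lemma exists_ker_pow_stable {H : Type*} [NormedAddCommGroup H] [InnerProductSpace ℂ H]
    [CompleteSpace H] {T : H →L[ℂ] H} (hT : IsCompactOperator T) {μ : ℂ} (hμ : μ ≠ 0) :
    ∃ p : ℕ, ∀ x : H, ((μ • (1 : H →L[ℂ] H) - T) ^ (p + 1)) x = 0 →
      ((μ • (1 : H →L[ℂ] H) - T) ^ p) x = 0 := by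
  by_contra! hcon
  set B : H →L[ℂ] H := μ • 1 - T with hB
  have hBT : Commute B T := by
    rw [hB]
    exact ((Commute.one_left T).smul_left μ).sub_left (Commute.refl T)
  have hstep : ∀ n : ℕ, ∃ f : H, ‖f‖ = 1 ∧ (B ^ (n + 1)) f = 0 ∧
      ∀ u : H, (B ^ n) u = 0 → 1 ≤ ‖f - u‖ := by
    intro n
    obtain ⟨x, hx1, hx0⟩ := hcon n
    let V : Submodule ℂ H := LinearMap.ker ((B ^ n : H →L[ℂ] H) : H →ₗ[ℂ] H)
    have hVc : IsClosed (V : Set H) := (B ^ n).isClosed_ker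
    have : CompleteSpace V := hVc.completeSpace_coe
    have hV : ∀ u, u ∈ V ↔ (B ^ n) u = 0 := fun u => LinearMap.mem_ker
    have hpx : (B ^ n) (V.starProjection x) = 0 := (hV _).1 (V.starProjection_apply_mem x)
    set w := x - V.starProjection x with hw
    have hwV : w ∈ Vᗮ := V.sub_starProjection_mem_orthogonal x
    have hw0 : w ≠ 0 := by
      intro h
      apply hx0
      rw [sub_eq_zero.1 h]
      exact hpx
    have hBw : (B ^ (n + 1)) w = 0 := by
      rw [hw, map_sub, hx1, pow_succ', mul_apply_eq_comp, hpx]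
      simp
    refine ⟨((‖w‖⁻¹ : ℝ) : ℂ) • w, ?_, by rw [map_smul, hBw, smul_zero], ?_⟩
    · rw [norm_smul]
      simp [hw0]
    · intro u hu
      set f := ((‖w‖⁻¹ : ℝ) : ℂ) • w with hf
      have hfn : ‖f‖ = 1 := by
        rw [hf, norm_smul]
        simp [hw0]
      have hfV : f ∈ Vᗮ := Vᗮ.smul_mem _ hwV
      have hinner : inner ℂ f u = 0 := V.inner_left_of_mem_orthogonal ((hV u).2 hu) hfV
      have := norm_sub_sq (𝕜 := ℂ) f u
      rw [hinner, hfn, map_zero] at this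
      nlinarith [norm_nonneg (f - u), norm_nonneg u]
  choose f hf1 hf2 hf3 using hstep
  have hmono : ∀ {m n : ℕ}, m ≤ n → ∀ u : H, (B ^ m) u = 0 → (B ^ n) u = 0 := by
    intro m n hmn u hu
    rw [← Nat.sub_add_cancel hmn, pow_add, mul_apply_eq_comp, hu, map_zero]
  have hlt : ∀ m n : ℕ, m < n → ‖μ‖ ≤ ‖T (f n) - T (f m)‖ := by
    intro m n hmn
    have hTm : (B ^ n) (T (f m)) = 0 := by
      have h : B ^ n * T = T * B ^ n := (hBT.pow_left n).eq
      rw [← mul_apply_eq_comp, h, mul_apply_eq_comp,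
        hmono hmn _ (hf2 m), map_zero]
    have hBn : (B ^ n) (B (f n)) = 0 := by
      rw [← mul_apply_eq_comp, ← pow_succ]
      exact hf2 n
    have hu := hf3 n (μ⁻¹ • (B (f n) + T (f m))) (by
      rw [map_smul, map_add, hBn, hTm, add_zero, smul_zero])
    have he : T (f n) - T (f m) = μ • (f n - μ⁻¹ • (B (f n) + T (f m))) := by
      rw [smul_sub, smul_inv_smul₀ hμ]
      simp [hB]
      abel
    rw [he, norm_smul]
    exact le_mul_of_one_le_right (norm_nonneg _) hu
  obtain ⟨C, hC, hC'⟩ := hT.image_closedBall_subset_compact 1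
  obtain ⟨y, -, ψ, hψ, hψy⟩ := hC.tendsto_subseq (x := fun n => T (f n))
    (fun n => hC' ⟨f n, by simp [hf1], rfl⟩)
  obtain ⟨N, hN⟩ := Metric.cauchySeq_iff'.1 hψy.cauchySeq ‖μ‖ (norm_pos_iff.2 hμ)
  have h1 := hN (N + 1) (Nat.le_succ N)
  rw [dist_eq_norm] at h1
  exact absurd (hlt _ _ (hψ (Nat.lt_succ_self N))) (not_le.2 h1)

/-- `μ - T` is injective modulo a closed `T`-invariant subspace, the range of the idempotent `P`,
as soon as this subspace contains all the kernels `ker (μ - T)^n`. -/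
lemma mem_of_sub_mem {H : Type*} [NormedAddCommGroup H] [InnerProductSpace ℂ H]
    [CompleteSpace H] {T P : H →L[ℂ] H} (hT : IsCompactOperator T) {μ : ℂ} (hμ : μ ≠ 0)
    (hP : P * P = P) (hTP : ∀ y, P y = y → P (T y) = T y)
    (hE : ∀ (n : ℕ) (y : H), ((μ • (1 : H →L[ℂ] H) - T) ^ n) y = 0 → P y = y)
    {x : H} (hx : P (μ • x - T x) = μ • x - T x) : P x = x := by
  have hPP : ∀ y, P (P y) = P y := fun y => congrArg (fun A : H →L[ℂ] H => A y) hP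
  obtain ⟨p, hp⟩ := exists_ker_pow_stable hT hμ
  set B : H →L[ℂ] H := μ • 1 - T with hB
  have hBa : ∀ y, B y = μ • y - T y := fun y => by simp [hB]
  let K : Submodule ℂ H := LinearMap.ker ((B ^ p : H →L[ℂ] H) : H →ₗ[ℂ] H)
  have : CompleteSpace K := (B ^ p).isClosed_ker.completeSpace_coe
  have hK : ∀ u, u ∈ K ↔ (B ^ p) u = 0 := fun u => LinearMap.mem_ker
  have hKstab : ∀ u, B u ∈ K → u ∈ K := by
    intro u hu
    rw [hK] at hu ⊢
    apply hp
    rw [pow_succ, mul_apply_eq_comp]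
    exact hu
  have hKP : ∀ u ∈ K, P u = u := fun u hu => hE p u ((hK u).1 hu)
  -- The operator induced by `T` on `M / K`, identified with the orthogonal complement of `K` in `M`
  -- and extended by composing with `P`.
  let G : H →L[ℂ] H := (1 - K.starProjection) * (T * P)
  have hGa : ∀ y, G y = T (P y) - K.starProjection (T (P y)) := fun y => by simp [G]
  have hG : IsCompactOperator (G : H → H) :=
    (hT.comp_clm P).clm_comp (1 - K.starProjection : H →L[ℂ] H)
  have hPG : ∀ y, P (G y) = G y := by
    intro y
    rw [hGa, map_sub, hTP _ (hPP y), hKP _ (K.starProjection_apply_mem _)]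
  have hres : μ ∈ resolventSet ℂ G := by
    refine (hG.hasEigenvalue_or_mem_resolventSet hμ).resolve_left fun hev => ?_
    obtain ⟨y, hy⟩ := hev.exists_hasEigenvector
    have hGy : G y = μ • y := hy.apply_eq_smul
    have hyG : y = μ⁻¹ • G y := by rw [hGy, inv_smul_smul₀ hμ]
    have hPy : P y = y := by rw [hyG, map_smul, hPG]
    have hyK : y ∈ Kᗮ := by
      rw [hyG, hGa]
      exact Kᗮ.smul_mem _ (K.sub_starProjection_mem_orthogonal _)
    have hyK' : y ∈ K := by
      apply hKstab
      have : B y = -K.starProjection (T y) := by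
        rw [hBa, ← hGy, hGa, hPy]
        abel
      rw [this]
      exact K.neg_mem (K.starProjection_apply_mem _)
    exact hy.2 (K.disjoint_def.1 K.orthogonal_disjoint y hyK' hyK)
  rw [spectrum.mem_resolventSet_iff, ContinuousLinearMap.isUnit_iff_bijective] at hres
  set m := μ • x - T x with hm
  obtain ⟨y, hy⟩ := hres.2 (m - K.starProjection m)
  have hy' : μ • y - G y = m - K.starProjection m := by
    rw [← hy]
    simp [Algebra.algebraMap_eq_smul_one]
  have hPy : P y = y := by
    have hyG : y = μ⁻¹ • (m - K.starProjection m + G y) := by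
      rw [← hy', sub_add_cancel, inv_smul_smul₀ hμ]
    rw [hyG, map_smul, map_add, map_sub, hx, hPG, hKP _ (K.starProjection_apply_mem _)]
  have hxy : x - y ∈ K := by
    apply hKstab
    have : B (x - y) = K.starProjection m + K.starProjection (T y) := by
      rw [hGa, hPy] at hy'
      rw [map_sub, hBa, hBa, ← hm]
      linear_combination (norm := module) -hy'
    rw [this]
    exact K.add_mem (K.starProjection_apply_mem _) (K.starProjection_apply_mem _)
  have h := hKP _ hxy
  rw [map_sub, hPy] at h
  exact sub_left_injective h

lemma algEigenspace_le_comap {H : Type*} [NormedAddCommGroup H] [InnerProductSpace ℂ H]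
    (T : H →L[ℂ] H) (l : ℂ) : algEigenspace T l ≤ (algEigenspace T l).comap (T : H →ₗ[ℂ] H) := by
  refine iSup_le fun n y hy => ?_
  refine Submodule.mem_iSup_of_mem n ?_
  have hc : Commute (l • (1 : Module.End ℂ H) - (T : H →ₗ[ℂ] H)) (T : H →ₗ[ℂ] H) :=
    ((Commute.one_left (T : Module.End ℂ H)).smul_left l).sub_left
      (Commute.refl (T : Module.End ℂ H))
  have h := (hc.pow_left n).eq
  rw [LinearMap.mem_ker] at hy ⊢
  rw [← Module.End.mul_apply, h, Module.End.mul_apply, hy, map_zero]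

/-- If `T` is compact on an infinite-dimensional Hilbert space and `P` is the orthogonal
projection onto the closed span of all algebraic eigenspaces `E_λ(T)`, `λ ∈ σ(T)\{0}`,
then `(1-P) T (1-P)` is quasi-nilpotent. -/
theorem stmt9 {H : Type*} [NormedAddCommGroup H] [InnerProductSpace ℂ H] [CompleteSpace H]
    (hH : ¬ FiniteDimensional ℂ H)
    (T : H →L[ℂ] H) (hT : IsCompactOperator T)
    (P : H →L[ℂ] H) (hPsa : IsSelfAdjoint P) (hPidem : P * P = P)
    (hPrange : LinearMap.range (P : H →ₗ[ℂ] H) =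
      (⨆ l ∈ spectrum ℂ T \ {0}, algEigenspace T l).topologicalClosure) :
    spectralRadius ℂ ((1 - P) * T * (1 - P)) = 0 := by
  have hPP : ∀ y, P (P y) = P y := fun y => congrArg (fun A : H →L[ℂ] H => A y) hPidem
  set N : Submodule ℂ H := ⨆ l ∈ spectrum ℂ T \ {0}, algEigenspace T l with hN
  have hmem : ∀ y, P y = y ↔ y ∈ N.topologicalClosure := by
    intro y
    rw [← hPrange]
    constructor
    · intro h
      exact ⟨y, h⟩
    · rintro ⟨z, rfl⟩
      exact hPP z
  have hTN : N ≤ N.comap (T : H →ₗ[ℂ] H) := by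
    refine iSup₂_le fun l hl => (algEigenspace_le_comap T l).trans ?_
    exact Submodule.comap_mono (le_iSup₂_of_le l hl le_rfl)
  have hTP : ∀ y, P y = y → P (T y) = T y := by
    intro y hy
    rw [hmem] at hy ⊢
    exact map_mem_closure T.continuous hy fun z hz => hTN hz
  have hS : IsCompactOperator ((1 - P) * T * (1 - P) : H →L[ℂ] H) :=
    (hT.clm_comp (1 - P : H →L[ℂ] H)).comp_clm (1 - P : H →L[ℂ] H)
  have key : ∀ μ ∈ spectrum ℂ ((1 - P) * T * (1 - P)), μ = 0 := by
    intro μ hμs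
    by_contra hμ
    obtain ⟨x, hx⟩ := ((hS.hasEigenvalue_iff_mem_spectrum hμ).2 hμs).exists_hasEigenvector
    have hSx : ((1 - P) * T * (1 - P)) x = μ • x := hx.apply_eq_smul
    have hSa : T (x - P x) - P (T (x - P x)) = μ • x := by
      rw [← hSx]
      simp
    have hPx : P x = 0 := by
      have h := congrArg P hSa
      rw [map_sub, hPP, sub_self, map_smul] at h
      exact (smul_eq_zero.1 h.symm).resolve_left hμ
    rw [hPx, sub_zero] at hSa
    have hE : ∀ (n : ℕ) (y : H), ((μ • (1 : H →L[ℂ] H) - T) ^ n) y = 0 → P y = y := by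
      intro n y hy
      by_cases hμT : μ ∈ spectrum ℂ T
      · rw [hmem]
        apply N.le_topologicalClosure
        refine Submodule.mem_iSup_of_mem μ (Submodule.mem_iSup_of_mem ⟨hμT, hμ⟩
          (Submodule.mem_iSup_of_mem n ?_))
        rw [LinearMap.mem_ker]
        have : ((μ • (1 : H →L[ℂ] H) - T : H →L[ℂ] H) : H →ₗ[ℂ] H) ^ n =
            (((μ • (1 : H →L[ℂ] H) - T) ^ n : H →L[ℂ] H) : H →ₗ[ℂ] H) := by
          simp
        exact (congrArg (fun A : H →ₗ[ℂ] H => A y) this).trans hy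
      -- Outside the spectrum `(μ - T)^n` is injective.
      · rw [spectrum.notMem_iff, Algebra.algebraMap_eq_smul_one] at hμT
        have hinj := (ContinuousLinearMap.isUnit_iff_bijective.1 (hμT.pow n)).1
        have : y = 0 := hinj (hy.trans (map_zero _).symm)
        rw [this, map_zero]
    have hm : P (μ • x - T x) = μ • x - T x := by
      rw [← hSa]
      simp [hPP]
    have := mem_of_sub_mem hT hμ hPidem hTP hE hm
    exact hx.2 (this.symm.trans hPx)
  simp only [spectralRadius]
  refine le_antisymm (iSup₂_le fun μ hμ => ?_) bot_le
  rw [key μ hμ]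
  simp
end

section
/- Every compact operator T on an infinite-dimensional complex Hilbert space can be written as T = D + Q, where D is a normal compact operator whose nonzero eigenvalues, with algebraic multiplicities, coincide with those of T, and Q is a quasi-nilpotent compact operator. -/
namespace SchurDecomp

set_option linter.unusedSectionVars false

open Filter Topology
open scoped InnerProductSpace

variable {H : Type*} [NormedAddCommGroup H] [InnerProductSpace ℂ H]

/-! ### Compact operators and orthonormal sequences -/

lemma coe_pow_sub (T : H →L[ℂ] H) (l : ℂ) (n : ℕ) :
    (l • (1 : Module.End ℂ H) - (T : H →ₗ[ℂ] H)) ^ n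
      = (((l • (1 : H →L[ℂ] H) - T) ^ n : H →L[ℂ] H) : H →ₗ[ℂ] H) := by
  rw [ContinuousLinearMap.toLinearMap_pow]; rfl

lemma mem_algEigenspace (T : H →L[ℂ] H) (l : ℂ) (x : H) :
    x ∈ algEigenspace T l ↔ ∃ n : ℕ, ((l • (1 : H →L[ℂ] H) - T) ^ n) x = 0 := by
  rw [algEigenspace, Submodule.mem_iSup_of_directed]
  · simp only [LinearMap.mem_ker, coe_pow_sub]; rfl
  · apply Monotone.directed_le
    intro m n hmn x hx
    obtain ⟨k, rfl⟩ := Nat.exists_eq_add_of_le' hmn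
    rw [LinearMap.mem_ker] at hx ⊢
    rw [pow_add, Module.End.mul_apply, hx, map_zero]

lemma pow_sub_eq {T : H →L[ℂ] H} (hT : IsCompactOperator T) (l : ℂ) (n : ℕ) :
    ∃ K : H →L[ℂ] H, IsCompactOperator K ∧ (l • (1 : H →L[ℂ] H) - T) ^ n = l ^ n • 1 - K := by
  induction n with
  | zero => exact ⟨0, isCompactOperator_zero, by simp⟩
  | succ n ih =>
    obtain ⟨K, hK, h⟩ := ih
    refine ⟨l ^ n • T + K ∘L (l • (1 : H →L[ℂ] H) - T), ?_, ?_⟩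
    · exact (hT.smul _).add (hK.comp_clm _)
    · rw [pow_succ, h]
      ext x
      simp [pow_succ, mul_smul, smul_sub]
      abel

lemma isCompactOperator_starProjection (V : Submodule ℂ H) [FiniteDimensional ℂ V] :
    IsCompactOperator V.starProjection := by
  have : LocallyCompactSpace V := .of_finiteDimensional_of_complete ℂ V
  have h : IsCompactOperator V.subtypeL := isCompactOperator_of_locallyCompactSpace_rng _
  exact h.comp_clm V.orthogonalProjectionOnto

/-- The diagonal entries of a compact operator along an orthonormal sequence cannot stay away from
zero, because an orthonormal sequence tends weakly to zero. -/
lemma orthonormal_diag_false {T : H →L[ℂ] H} (hT : IsCompactOperator T) {ε : ℝ} (hε : 0 < ε)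
    {g : ℕ → H} (hg : Orthonormal ℂ g) (h : ∀ n, ε ≤ ‖⟪g n, T (g n)⟫_ℂ‖) : False := by
  have hK := hT.isCompact_closure_image_closedBall 1
  obtain ⟨w, -, φ, hφ, hlim⟩ := hK.tendsto_subseq (x := fun n => T (g n))
    (fun n => subset_closure ⟨g n, by simp [hg.1 n], rfl⟩)
  have h1 : Tendsto (fun n => ‖⟪g (φ n), w⟫_ℂ‖) atTop (𝓝 0) := by
    have := (hg.inner_products_summable (x := w)).tendsto_atTop_zero.comp hφ.tendsto_atTop
    simpa using this.sqrt
  have h2 : Tendsto (fun n => ‖T (g (φ n)) - w‖) atTop (𝓝 0) :=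
    tendsto_iff_norm_sub_tendsto_zero.1 hlim
  have h3 := h1.add h2
  rw [add_zero] at h3
  obtain ⟨n, hn⟩ := (h3.eventually (gt_mem_nhds hε)).exists
  refine absurd (h (φ n)) (not_le.2 (lt_of_le_of_lt ?_ hn))
  calc ‖⟪g (φ n), T (g (φ n))⟫_ℂ‖ = ‖⟪g (φ n), w⟫_ℂ + ⟪g (φ n), T (g (φ n)) - w⟫_ℂ‖ := by
        rw [← inner_add_right]; simp
    _ ≤ _ := (norm_add_le _ _).trans (by
        gcongr
        refine (norm_inner_le_norm _ _).trans ?_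
        rw [hg.1, one_mul])

/-- If `T` acts as `ν` on `x` modulo a `T`-invariant subspace `V` not containing `x`, then
orthogonalizing `x` against `V` gives a unit vector with diagonal entry `ν`. -/
lemma exists_unit_diag (T : H →L[ℂ] H) (ν : ℂ) (V : Submodule ℂ H) [V.HasOrthogonalProjection]
    (hV : ∀ v ∈ V, T v ∈ V) {x : H} (hx : x ∉ V) (hTx : T x - ν • x ∈ V) :
    ∃ g : H, ‖g‖ = 1 ∧ g ∈ Vᗮ ∧ g ∈ V ⊔ Submodule.span ℂ {x} ∧ ⟪g, T g⟫_ℂ = ν := by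
  set z := x - V.starProjection x with hz
  have hPV : V.starProjection x ∈ V := V.starProjection_apply_mem x
  have hz0 : z ≠ 0 := fun h => hx (by rw [sub_eq_zero.1 h]; exact hPV)
  have hzV : z ∈ Vᗮ := V.sub_starProjection_mem_orthogonal x
  have hTz : T z - ν • z ∈ V := by
    have : T z - ν • z = (T x - ν • x) - (T (V.starProjection x) - ν • V.starProjection x) := by
      rw [hz, map_sub, smul_sub]; abel
    rw [this]
    exact V.sub_mem hTx (V.sub_mem (hV _ hPV) (V.smul_mem _ hPV))
  have hn : ‖z‖ ≠ 0 := norm_ne_zero_iff.2 hz0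
  refine ⟨(‖z‖⁻¹ : ℂ) • z, ?_, Submodule.smul_mem _ _ hzV, ?_, ?_⟩
  · rw [norm_smul]; simp [hn]
  · refine Submodule.smul_mem _ _ (Submodule.sub_mem _ ?_ (Submodule.mem_sup_left hPV))
    exact Submodule.mem_sup_right (Submodule.mem_span_singleton_self x)
  · have h0 : ⟪z, T z⟫_ℂ = ν * (‖z‖ : ℂ) ^ 2 := by
      have := Submodule.inner_left_of_mem_orthogonal hTz hzV
      rw [inner_sub_right, inner_smul_right, sub_eq_zero] at this
      rw [this, inner_self_eq_norm_sq_to_K]; rfl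
    have hn' : (‖z‖ : ℂ) ≠ 0 := by exact_mod_cast hn
    rw [map_smul, inner_smul_left, inner_smul_right, h0]
    simp
    field_simp

variable [CompleteSpace H]

/-! ### The Riesz decomposition -/

/-- The kernels of the powers of `ν - T` stabilize: otherwise, orthogonalizing each kernel against
the preceding one gives an orthonormal sequence with constant diagonal entries `ν`. -/
lemma exists_ascent {T : H →L[ℂ] H} (hT : IsCompactOperator T) {ν : ℂ} (hν : ν ≠ 0) :
    ∃ N : ℕ, ∀ m x, ((ν • (1 : H →L[ℂ] H) - T) ^ m) x = 0 →
      ((ν • (1 : H →L[ℂ] H) - T) ^ N) x = 0 := by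
  set A := ν • (1 : H →L[ℂ] H) - T with hA
  by_cases hst : ∃ N : ℕ, ∀ x, (A ^ (N + 1)) x = 0 → (A ^ N) x = 0
  · obtain ⟨N, hN⟩ := hst
    refine ⟨N, fun m x hx => ?_⟩
    have key : ∀ k, (A ^ (N + k)) x = 0 → (A ^ N) x = 0 := by
      intro k
      induction k with
      | zero => exact id
      | succ k ih =>
        intro h
        apply ih
        have h' : (A ^ (N + 1)) ((A ^ k) x) = 0 := by
          rw [← mul_apply_eq_comp, ← pow_add, add_right_comm, add_assoc]
          exact h
        have := hN _ h'
        rwa [← mul_apply_eq_comp, ← pow_add] at this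
    apply key m
    rw [pow_add, mul_apply_eq_comp, hx, map_zero]
  · push Not at hst
    exfalso
    have hinv : ∀ n, ∀ v ∈ (A ^ n).ker, T v ∈ (A ^ n).ker := by
      intro n v hv
      have hc : Commute (A ^ n) T := by
        apply Commute.pow_left
        exact ((Commute.one_left T).smul_left ν).sub_left (Commute.refl T)
      have := congrArg (fun S : H →L[ℂ] H => S v) hc.eq
      simp only [mul_apply_eq_comp] at this
      rw [LinearMap.mem_ker, ContinuousLinearMap.coe_coe] at hv ⊢
      rw [this, hv, map_zero]
    have hmono : ∀ m n, m ≤ n → (A ^ m).ker ≤ (A ^ n).ker := by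
      intro m n hmn x hx
      obtain ⟨k, rfl⟩ := Nat.exists_eq_add_of_le' hmn
      rw [LinearMap.mem_ker, ContinuousLinearMap.coe_coe] at hx ⊢
      rw [pow_add, mul_apply_eq_comp, hx, map_zero]
    have hex : ∀ n, ∃ g : H, ‖g‖ = 1 ∧ g ∈ (A ^ n).kerᗮ ∧ g ∈ (A ^ (n + 1)).ker ∧
        ⟪g, T g⟫_ℂ = ν := by
      intro n
      obtain ⟨x, hx1, hx0⟩ := hst n
      obtain ⟨g, h1, h2, h3, h4⟩ := exists_unit_diag T ν (A ^ n).ker (hinv n) (x := x) hx0 (by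
        have : T x - ν • x = - A x := by simp [hA]
        rw [this]
        refine Submodule.neg_mem _ ?_
        rw [LinearMap.mem_ker, ContinuousLinearMap.coe_coe, ← mul_apply_eq_comp,
          ← pow_succ, hx1])
      refine ⟨g, h1, h2, ?_, h4⟩
      refine (sup_le (hmono _ _ n.le_succ) ?_) h3
      rw [Submodule.span_singleton_le_iff_mem]
      exact hx1
    choose g h1 h2 h3 h4 using hex
    have hlt : ∀ m n, m < n → ⟪g m, g n⟫_ℂ = 0 := fun m n hmn =>
      Submodule.inner_right_of_mem_orthogonal (hmono _ _ hmn (h3 m)) (h2 n)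
    refine orthonormal_diag_false hT (norm_pos_iff.2 hν) (g := g) ⟨h1, ?_⟩ (fun n => by rw [h4])
    intro m n hmn
    rcases lt_or_gt_of_ne hmn with h | h
    · exact hlt _ _ h
    · rw [inner_eq_zero_symm]; exact hlt _ _ h

/-- The Riesz decomposition: for some power `B = (ν - T) ^ (N + 1)`, the space is the direct sum of
the finite-dimensional root space `ker B` and the closed range of `B`. -/
lemma riesz {T : H →L[ℂ] H} (hT : IsCompactOperator T) {ν : ℂ} (hν : ν ≠ 0) :
    ∃ (N : ℕ) (B : H →L[ℂ] H), B = (ν • (1 : H →L[ℂ] H) - T) ^ (N + 1) ∧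
      algEigenspace T ν = B.ker ∧ FiniteDimensional ℂ B.ker ∧
      IsClosed (B.range : Set H) ∧ Disjoint B.ker B.range ∧ B.ker ⊔ B.range = ⊤ := by
  obtain ⟨N, hN⟩ := exists_ascent hT hν
  set A := ν • (1 : H →L[ℂ] H) - T with hA
  refine ⟨N, A ^ (N + 1), rfl, ?_⟩
  have hN' : ∀ m x, (A ^ m) x = 0 → (A ^ (N + 1)) x = 0 := fun m x hx => by
    rw [pow_succ', mul_apply_eq_comp, hN m x hx, map_zero]
  obtain ⟨K, hK, hBK⟩ := pow_sub_eq hT ν (N + 1)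
  set B := A ^ (N + 1) with hB
  have hc : ν ^ (N + 1) ≠ 0 := pow_ne_zero _ hν
  have hBB : ∀ x, B (B x) = 0 → B x = 0 := by
    intro x hx
    apply hN' ((N + 1) + (N + 1))
    rw [pow_add]; exact hx
  have hfin : FiniteDimensional ℂ B.ker := by
    have hKk : ∀ v ∈ B.ker, K v = ν ^ (N + 1) • v := by
      intro v hv
      have : B v = 0 := hv
      rw [hBK] at this
      exact (sub_eq_zero.1 this).symm
    have h1 : IsCompactOperator ((K : H →ₗ[ℂ] H).restrict (p := B.ker) (q := B.ker)
        fun v hv => by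
          rw [ContinuousLinearMap.coe_coe, hKk v hv]; exact Submodule.smul_mem _ _ hv) :=
      IsCompactOperator.restrict (f := (K : H →ₗ[ℂ] H)) hK _ B.isClosed_ker
    have h2 := h1.smul (ν ^ (N + 1))⁻¹
    apply FiniteDimensional.of_isCompactOperator_id (𝕜 := ℂ)
    have h3 : (id : B.ker → B.ker) = (ν ^ (N + 1))⁻¹ • ⇑((K : H →ₗ[ℂ] H).restrict (p := B.ker)
        (q := B.ker) fun v hv => by
          rw [ContinuousLinearMap.coe_coe, hKk v hv]; exact Submodule.smul_mem _ _ hv) := by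
      funext v
      apply Subtype.ext
      simp [hKk v v.2, hc]
    rw [h3]
    exact h2
  have hdisj : Disjoint B.ker B.range := by
    rw [Submodule.disjoint_def]
    rintro _ hx ⟨y, rfl⟩
    exact hBB y hx
  -- `B + P` is a nonzero scalar minus a compact operator, and it is injective because
  -- `ker B ∩ range B = 0`; by the Fredholm alternative it is invertible. This yields at once that
  -- `ker B + range B` is everything and that `range B` is closed.
  set P := B.ker.starProjection with hP
  have hu : IsUnit (B + P) := by
    have hKP : IsCompactOperator (K - P : H →L[ℂ] H) := by
      exact hK.sub (isCompactOperator_starProjection _)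
    have heq : B + P = algebraMap ℂ (H →L[ℂ] H) (ν ^ (N + 1)) - (K - P) := by
      rw [hBK, Algebra.algebraMap_eq_smul_one]; abel
    rcases hKP.hasEigenvalue_or_mem_resolventSet hc with h | h
    · exfalso
      obtain ⟨v, hv⟩ := h.exists_hasEigenvector
      have h0 : B v + P v = 0 := by
        have h1 := hv.apply_eq_smul
        have h2 := congrArg (fun S : H →L[ℂ] H => S v) heq
        simp only [add_apply, sub_apply,
          ContinuousLinearMap.algebraMap_apply] at h2
        rw [h2, ← sub_apply]
        erw [h1]; simp
      have hPv : P v ∈ B.ker := B.ker.starProjection_apply_mem v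
      have hBv : B v = 0 := by
        apply hBB
        rw [eq_neg_of_add_eq_zero_left h0, map_neg, neg_eq_zero]
        exact hPv
      apply hv.2
      rw [hBv, zero_add] at h0
      rw [← h0]
      exact (B.ker.starProjection_eq_self_iff.2 hBv).symm
    · rw [spectrum.mem_resolventSet_iff] at h
      rwa [heq]
  obtain ⟨u, hu⟩ := hu
  have hsurj : ∀ x, ∃ y, B y + P y = x := fun x => ⟨(↑u⁻¹ : H →L[ℂ] H) x, by
    rw [← add_apply, ← hu, ← mul_apply_eq_comp, Units.mul_inv]
    rfl⟩
  refine ⟨?_, hfin, ?_, hdisj, ?_⟩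
  · ext x
    rw [mem_algEigenspace]
    exact ⟨fun ⟨m, hm⟩ => hN' m x hm, fun h => ⟨N + 1, h⟩⟩
  -- `B + P` maps the complement of `ker B` onto `range B`.
  · have : (B.range : Set H) = (fun x => (↑u⁻¹ : H →L[ℂ] H) x) ⁻¹' (B.kerᗮ : Set H) := by
      have hinv : ∀ x, (↑u⁻¹ : H →L[ℂ] H) (B x + P x) = x := by
        intro x
        rw [← add_apply, ← hu, ← mul_apply_eq_comp, Units.inv_mul]
        rfl
      have hP0 : ∀ x ∈ B.kerᗮ, P x = 0 := fun x hx => by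
        rw [← Submodule.ker_starProjection] at hx; exact hx
      ext x
      constructor
      · rintro ⟨y, rfl⟩
        have h1 : y - P y ∈ B.kerᗮ := B.ker.sub_starProjection_mem_orthogonal y
        have h2 : B (P y) = 0 := B.ker.starProjection_apply_mem y
        have h3 : B y = B (y - P y) + P (y - P y) := by rw [hP0 _ h1, map_sub, h2]; simp
        change (↑u⁻¹ : H →L[ℂ] H) (B y) ∈ B.kerᗮ
        rwa [h3, hinv]
      · intro hx
        obtain ⟨y, rfl⟩ := hsurj x
        rw [Set.mem_preimage, hinv] at hx
        rw [hP0 _ hx, add_zero]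
        exact ⟨y, rfl⟩
    rw [this]
    exact (Submodule.isClosed_orthogonal _).preimage (↑u⁻¹ : H →L[ℂ] H).continuous
  · rw [eq_top_iff]
    intro x _
    obtain ⟨y, rfl⟩ := hsurj x
    exact Submodule.add_mem _ (Submodule.mem_sup_right ⟨y, rfl⟩)
      (Submodule.mem_sup_left (B.ker.starProjection_apply_mem y))

/-! ### Orthogonalizing a well-ordered family of subspaces -/

/-- The closed span of the subspaces `M κ` for `κ` strictly before `ν`, in the arbitrary well-order
`WellOrderingRel` of `ℂ`. -/
def below (M : ℂ → Submodule ℂ H) (ν : ℂ) : Submodule ℂ H :=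
  (⨆ κ : {κ : ℂ // WellOrderingRel κ ν}, M κ).topologicalClosure

instance (M : ℂ → Submodule ℂ H) (ν : ℂ) : CompleteSpace (below M ν) :=
  (Submodule.isClosed_topologicalClosure _).completeSpace_coe

/-- The Gram-Schmidt step at `ν`: the image of `M ν` under the orthogonal projection onto the
complement of `below M ν`. -/
noncomputable def layer (M : ℂ → Submodule ℂ H) (ν : ℂ) : Submodule ℂ H :=
  (M ν).map ((below M ν)ᗮ.starProjection : H →ₗ[ℂ] H)

instance (M : ℂ → Submodule ℂ H) (ν : ℂ) [FiniteDimensional ℂ (M ν)] :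
    FiniteDimensional ℂ (layer M ν) := by
  unfold layer; infer_instance

section Layers

variable {M : ℂ → Submodule ℂ H} {ν κ : ℂ}

lemma below_le {V : Submodule ℂ H} (hV : IsClosed (V : Set H))
    (h : ∀ κ, WellOrderingRel κ ν → M κ ≤ V) : below M ν ≤ V :=
  Submodule.topologicalClosure_minimal _ (iSup_le fun κ => h κ κ.2) hV

lemma le_below (h : WellOrderingRel κ ν) : M κ ≤ below M ν :=
  (le_iSup (fun κ : {κ : ℂ // WellOrderingRel κ ν} => M κ) ⟨κ, h⟩).trans
    (Submodule.le_topologicalClosure _)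

lemma isClosed_below : IsClosed (below M ν : Set H) := Submodule.isClosed_topologicalClosure _

lemma below_mono (h : WellOrderingRel κ ν) : below M κ ≤ below M ν :=
  below_le isClosed_below fun _ h' => le_below (_root_.trans h' h)

lemma exists_of_mem_layer {x : H} (hx : x ∈ layer M ν) :
    ∃ m ∈ M ν, ∃ e ∈ below M ν, x = m - e := by
  obtain ⟨m, hm, rfl⟩ := hx
  exact ⟨m, hm, _, (below M ν).starProjection_apply_mem m, Submodule.starProjection_orthogonal_val m⟩

lemma exists_sub_mem_layer {m : H} (hm : m ∈ M ν) : ∃ e ∈ below M ν, m - e ∈ layer M ν :=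
  ⟨_, (below M ν).starProjection_apply_mem m, m, hm, Submodule.starProjection_orthogonal_val m⟩

lemma layer_le_orthogonal : layer M ν ≤ (below M ν)ᗮ := by
  rintro _ ⟨m, -, rfl⟩
  exact Submodule.starProjection_apply_mem _ m

lemma layer_le_below (h : WellOrderingRel κ ν) : layer M κ ≤ below M ν := by
  intro x hx
  obtain ⟨m, hm, e, he, rfl⟩ := exists_of_mem_layer hx
  exact Submodule.sub_mem _ (le_below h hm) (below_mono h he)

lemma inner_layer (h : κ ≠ ν) {x y : H} (hx : x ∈ layer M κ) (hy : y ∈ layer M ν) :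
    ⟪x, y⟫_ℂ = 0 := by
  rcases trichotomous_of WellOrderingRel κ ν with h' | h' | h'
  · exact Submodule.inner_right_of_mem_orthogonal (layer_le_below h' hx) (layer_le_orthogonal hy)
  · exact absurd h' h
  · exact Submodule.inner_left_of_mem_orthogonal (layer_le_below h' hy) (layer_le_orthogonal hx)

lemma finrank_layer (h : Disjoint (M ν) (below M ν)) :
    Module.finrank ℂ (layer M ν) = Module.finrank ℂ (M ν) := by
  unfold layer
  rw [← LinearMap.range_domRestrict]
  apply LinearMap.finrank_range_of_inj
  rw [← LinearMap.ker_eq_bot, LinearMap.ker_eq_bot']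
  intro m hm
  have h1 : (m : H) - (below M ν).starProjection m = 0 := by
    rw [← Submodule.starProjection_orthogonal_val]; exact hm
  apply Subtype.ext
  refine Submodule.disjoint_def.1 h m m.2 ?_
  rw [sub_eq_zero.1 h1]
  exact Submodule.starProjection_apply_mem _ _

lemma mem_orthogonal_below {y : H} (h : ∀ κ, WellOrderingRel κ ν → y ∈ (M κ)ᗮ) :
    y ∈ (below M ν)ᗮ := by
  have : below M ν ≤ (Submodule.span ℂ {y})ᗮ :=
    below_le (Submodule.isClosed_orthogonal _) fun κ hκ x hx => by
      rw [Submodule.mem_orthogonal_singleton_iff_inner_left]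
      exact h κ hκ x hx
  intro x hx
  exact Submodule.mem_orthogonal_singleton_iff_inner_left.1 (this hx)

lemma mem_orthogonal_layer {y : H} (h : ∀ κ, y ∈ (M κ)ᗮ) : y ∈ (layer M ν)ᗮ := by
  intro x hx
  obtain ⟨m, hm, e, he, rfl⟩ := exists_of_mem_layer hx
  rw [inner_sub_left, h _ m hm, mem_orthogonal_below (fun κ _ => h κ) e he, sub_zero]

end Layers

/-! ### The block-diagonal operator of an orthogonal family -/

section Diagonal

variable {G : ℂ → Submodule ℂ H} [∀ ν, FiniteDimensional ℂ (G ν)]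

/-- Bessel's inequality for a pairwise orthogonal family of subspaces. -/
lemma sum_norm_proj_le (hG : ∀ κ ν, κ ≠ ν → ∀ x ∈ G κ, ∀ y ∈ G ν, ⟪x, y⟫_ℂ = 0)
    (t : Finset ℂ) (x : H) : ∑ ν ∈ t, ‖(G ν).starProjection x‖ ^ 2 ≤ ‖x‖ ^ 2 := by
  have hO : OrthogonalFamily ℂ (fun ν => G ν) fun ν => (G ν).subtypeₗᵢ :=
    fun κ ν h v w => hG κ ν h v v.2 w w.2
  have h1 := hO.norm_sum (fun ν => (G ν).orthogonalProjectionOnto x) t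
  set z := ∑ ν ∈ t, (G ν).starProjection x
  have h1' : ‖z‖ ^ 2 = ∑ ν ∈ t, ‖(G ν).starProjection x‖ ^ 2 := h1
  have h2 : RCLike.re ⟪z, x⟫_ℂ = ∑ ν ∈ t, ‖(G ν).starProjection x‖ ^ 2 := by
    rw [sum_inner, map_sum]
    refine Finset.sum_congr rfl fun ν _ => ?_
    exact Submodule.re_inner_starProjection_eq_normSq _ _
  have h3 : ‖z‖ ^ 2 ≤ ‖z‖ * ‖x‖ := by
    rw [h1', ← h2]; exact (RCLike.re_le_norm _).trans (norm_inner_le_norm _ _)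
  rw [← h1']
  have : ‖z‖ ≤ ‖x‖ := by
    by_contra hlt
    push Not at hlt
    nlinarith [norm_nonneg x]
  gcongr

lemma norm_sum_smul_proj_le (hG : ∀ κ ν, κ ≠ ν → ∀ x ∈ G κ, ∀ y ∈ G ν, ⟪x, y⟫_ℂ = 0)
    {ε : ℝ} (hε : 0 ≤ ε) (t : Finset ℂ) (ht : ∀ ν ∈ t, ε ≤ ‖ν‖ → G ν = ⊥) :
    ‖∑ ν ∈ t, ν • (G ν).starProjection‖ ≤ ε := by
  refine ContinuousLinearMap.opNorm_le_bound _ hε fun x => ?_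
  have hO : OrthogonalFamily ℂ (fun ν => G ν) fun ν => (G ν).subtypeₗᵢ :=
    fun κ ν h v w => hG κ ν h v v.2 w w.2
  have h1 : ‖∑ ν ∈ t, ν • (G ν).starProjection x‖ ^ 2
      = ∑ ν ∈ t, ‖ν • (G ν).starProjection x‖ ^ 2 :=
    hO.norm_sum (fun ν => ν • (G ν).orthogonalProjectionOnto x) t
  rw [sum_apply]
  simp only [smul_apply]
  refine (sq_le_sq₀ (norm_nonneg _) (by positivity)).1 ?_
  rw [h1, mul_pow]
  refine le_trans ?_ (mul_le_mul_of_nonneg_left (sum_norm_proj_le hG t x) (sq_nonneg ε))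
  rw [Finset.mul_sum]
  refine Finset.sum_le_sum fun ν hν => ?_
  rw [norm_smul, mul_pow]
  by_cases h : ε ≤ ‖ν‖
  · have : (G ν).starProjection x = 0 :=
      (Submodule.mem_bot ℂ).1 ((ht ν hν h).le ((G ν).starProjection_apply_mem x))
    simp [this]
  · push Not at h
    gcongr

/-- The operator norm of a finite sum is bounded by the largest `‖ν‖` with `G ν ≠ ⊥` that occurs in
it, which gives the Cauchy criterion. -/
lemma summable_diag (hG : ∀ κ ν, κ ≠ ν → ∀ x ∈ G κ, ∀ y ∈ G ν, ⟪x, y⟫_ℂ = 0)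
    (hfin : ∀ ε > 0, {ν : ℂ | ε ≤ ‖ν‖ ∧ G ν ≠ ⊥}.Finite) :
    Summable fun ν : ℂ => ν • (G ν).starProjection := by
  rw [summable_iff_vanishing_norm]
  intro ε hε
  refine ⟨(hfin (ε / 2) (by positivity)).toFinset, fun t ht => ?_⟩
  refine (norm_sum_smul_proj_le hG (half_pos hε).le t fun ν hν h => ?_).trans_lt (half_lt_self hε)
  by_contra hb
  exact Finset.disjoint_left.1 ht hν (by simpa using ⟨h, hb⟩)

/-- The operator acting as the scalar `ν` on each `G ν` and as zero on the complement of all of them,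
as a sum in operator norm. It is the junk value `0` when the family is not summable. -/
noncomputable def diag (G : ℂ → Submodule ℂ H) [∀ ν, FiniteDimensional ℂ (G ν)] : H →L[ℂ] H :=
  ∑' ν : ℂ, ν • (G ν).starProjection

variable (hG : ∀ κ ν, κ ≠ ν → ∀ x ∈ G κ, ∀ y ∈ G ν, ⟪x, y⟫_ℂ = 0)
  (hfin : ∀ ε > 0, {ν : ℂ | ε ≤ ‖ν‖ ∧ G ν ≠ ⊥}.Finite)

include hfin hG in
lemma hasSum_diag : HasSum (fun ν : ℂ => ν • (G ν).starProjection) (diag G) :=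
  (summable_diag hG hfin).hasSum

include hfin hG in
lemma isCompactOperator_diag : IsCompactOperator (diag G) := by
  refine isCompactOperator_of_tendsto (hasSum_diag hG hfin) (Eventually.of_forall fun t => ?_)
  exact (compactOperator (RingHom.id ℂ) H H).sum_mem fun ν _ =>
    (isCompactOperator_starProjection (G ν)).smul ν

include hG in
lemma proj_mul_proj {κ ν : ℂ} (h : κ ≠ ν) :
    (G κ).starProjection * (G ν).starProjection = 0 := by
  ext x
  change (G κ).starProjection ((G ν).starProjection x) = 0
  have : (G ν).starProjection x ∈ (G κ)ᗮ := fun y hy =>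
    hG κ ν h y hy _ (Submodule.starProjection_apply_mem _ _)
  rwa [← Submodule.ker_starProjection] at this

include hG in
lemma isStarNormal_sum (t : Finset ℂ) :
    IsStarNormal (∑ ν ∈ t, ν • (G ν).starProjection) := by
  have hs : ∀ ν, star (G ν).starProjection = (G ν).starProjection := fun ν =>
    isSelfAdjoint_starProjection (G ν)
  constructor
  rw [star_sum]
  refine Commute.sum_left _ _ _ fun κ _ => Commute.sum_right _ _ _ fun ν _ => ?_
  rw [star_smul, hs]
  refine Commute.smul_left (Commute.smul_right ?_ _) _
  by_cases h : κ = ν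
  · rw [h]; exact Commute.refl _
  · rw [commute_iff_eq, proj_mul_proj hG h, proj_mul_proj hG (Ne.symm h)]

include hfin hG in
lemma isStarNormal_diag : IsStarNormal (diag G) := by
  have hc : IsClosed {S : H →L[ℂ] H | star S * S = S * star S} :=
    isClosed_eq (by fun_prop) (by fun_prop)
  exact ⟨hc.mem_of_tendsto (hasSum_diag hG hfin)
    (Eventually.of_forall fun t => (isStarNormal_sum hG t).star_comm_self)⟩

include hfin hG in
lemma proj_mul_diag (ν : ℂ) : (G ν).starProjection * diag G = ν • (G ν).starProjection := by
  refine ((hasSum_diag hG hfin).mul_left _).unique ?_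
  have : (G ν).starProjection * (ν • (G ν).starProjection) = ν • (G ν).starProjection := by
    rw [mul_smul_comm, (G ν).isIdempotentElem_starProjection.eq]
  rw [← this]
  refine hasSum_single ν fun κ hκ => ?_
  rw [mul_smul_comm, proj_mul_proj hG (Ne.symm hκ), smul_zero]

include hfin hG in
lemma diag_mul_proj (ν : ℂ) : diag G * (G ν).starProjection = ν • (G ν).starProjection := by
  refine ((hasSum_diag hG hfin).mul_right _).unique ?_
  have : (ν • (G ν).starProjection) * (G ν).starProjection = ν • (G ν).starProjection := by
    rw [smul_mul_assoc, (G ν).isIdempotentElem_starProjection.eq]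
  rw [← this]
  refine hasSum_single ν fun κ hκ => ?_
  rw [smul_mul_assoc, proj_mul_proj hG hκ, smul_zero]

include hfin hG in
lemma diag_apply_of_mem {ν : ℂ} {x : H} (hx : x ∈ G ν) : diag G x = ν • x := by
  have := congrArg (fun S : H →L[ℂ] H => S x) (diag_mul_proj hG hfin ν)
  simpa [mul_apply_eq_comp, (G ν).starProjection_eq_self_iff.2 hx] using this

include hfin hG in
lemma hasSum_diag_apply (x : H) : HasSum (fun ν : ℂ => ν • (G ν).starProjection x) (diag G x) :=
  (hasSum_diag hG hfin).mapL (ContinuousLinearMap.apply ℂ H x)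

include hfin hG in
lemma diag_apply_of_orthogonal {x : H} (hx : ∀ ν, x ∈ (G ν)ᗮ) : diag G x = 0 := by
  refine (hasSum_diag_apply hG hfin x).unique ?_
  have : ∀ ν, (G ν).starProjection x = 0 := fun ν => by
    have := hx ν
    rwa [← Submodule.ker_starProjection] at this
  simp only [this, smul_zero]
  exact hasSum_zero

include hfin hG in
lemma inner_diag_of_orthogonal {y : H} (hy : ∀ ν, y ∈ (G ν)ᗮ) (x : H) : ⟪y, diag G x⟫_ℂ = 0 := by
  refine ((hasSum_diag_apply hG hfin x).mapL (innerSL ℂ y)).unique ?_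
  have : ∀ ν, ⟪y, (G ν).starProjection x⟫_ℂ = 0 := fun ν =>
    Submodule.inner_left_of_mem_orthogonal (Submodule.starProjection_apply_mem _ _) (hy ν)
  simp [this, hasSum_zero]

include hfin hG in
/-- The diagonal operator has no generalized eigenvectors beyond the eigenvectors in `G μ`. -/
lemma algEigenspace_diag {μ : ℂ} (hμ : μ ≠ 0) : algEigenspace (diag G) μ = G μ := by
  have hpow : ∀ {z : H} {κ : ℂ}, diag G z = κ • z → ∀ n : ℕ,
      ((μ • (1 : H →L[ℂ] H) - diag G) ^ n) z = (μ - κ) ^ n • z := by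
    intro z κ hz n
    induction n with
    | zero => simp
    | succ n ih =>
      rw [pow_succ', mul_apply_eq_comp, ih, map_smul, pow_succ, mul_smul]
      simp [hz, sub_smul]
  ext x
  rw [mem_algEigenspace]
  constructor
  · rintro ⟨n, hn⟩
    have hP : ∀ ν, ν ≠ μ → (G ν).starProjection x = 0 := by
      intro ν hν
      have hc : ∀ n : ℕ, (G ν).starProjection * (μ • (1 : H →L[ℂ] H) - diag G) ^ n
          = (μ - ν) ^ n • (G ν).starProjection := by
        intro n
        induction n with
        | zero => simp
        | succ n ih =>
          rw [pow_succ, ← mul_assoc, ih, smul_mul_assoc, mul_sub, proj_mul_diag hG hfin,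
            mul_smul_comm, mul_one, ← sub_smul, smul_smul, pow_succ]
      have h1 := congrArg (fun S : H →L[ℂ] H => S x) (hc n)
      simp only [mul_apply_eq_comp, hn, map_zero] at h1
      exact (smul_eq_zero.1 h1.symm).resolve_left (pow_ne_zero _ (sub_ne_zero.2 hν.symm))
    -- The remainder `z` is orthogonal to every `G ν`, so `D z = 0`, and `(μ - D) ^ (n + 1)` acts on it
    -- as the nonzero scalar `μ ^ (n + 1)`.
    set z := x - (G μ).starProjection x with hz
    have hzo : ∀ ν, z ∈ (G ν)ᗮ := by
      intro ν
      by_cases h : ν = μ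
      · rw [h]; exact Submodule.sub_starProjection_mem_orthogonal _
      · refine Submodule.sub_mem _ ?_ ?_
        · rw [← Submodule.ker_starProjection]; exact hP ν h
        · exact fun y hy => hG ν μ h y hy _ (Submodule.starProjection_apply_mem _ _)
    have hDz : diag G z = (0 : ℂ) • z := by rw [diag_apply_of_orthogonal hG hfin hzo, zero_smul]
    have hmem := (G μ).starProjection_apply_mem x
    have h2 : ((μ • (1 : H →L[ℂ] H) - diag G) ^ (n + 1)) z = 0 := by
      rw [hz, map_sub, hpow (diag_apply_of_mem hG hfin hmem) (n + 1), sub_self, zero_pow (by simp),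
        zero_smul, pow_succ', mul_apply_eq_comp, hn, map_zero, sub_zero]
    rw [hpow hDz, sub_zero] at h2
    have h3 : z = 0 := (smul_eq_zero.1 h2).resolve_left (pow_ne_zero _ hμ)
    rw [sub_eq_zero.1 h3]
    exact hmem
  · intro hx
    exact ⟨1, by rw [hpow (diag_apply_of_mem hG hfin hx)]; simp⟩

end Diagonal

/-! ### The root spaces of a compact operator -/

section Final

variable {T : H →L[ℂ] H}

/-- The algebraic eigenspace of `T` at a nonzero `ν`. At `ν = 0`, where the algebraic eigenspace may
be infinite-dimensional, the value is `⊥`, so that the family can be indexed by all of `ℂ`. -/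
noncomputable def rootSpace (T : H →L[ℂ] H) (ν : ℂ) : Submodule ℂ H :=
  if ν = 0 then ⊥ else algEigenspace T ν

lemma rootSpace_of_ne {ν : ℂ} (hν : ν ≠ 0) : rootSpace T ν = algEigenspace T ν := if_neg hν

lemma map_mem_algEigenspace {ν : ℂ} {x : H} (hx : x ∈ algEigenspace T ν) :
    (ν • (1 : H →L[ℂ] H) - T) x ∈ algEigenspace T ν := by
  rw [mem_algEigenspace] at hx ⊢
  obtain ⟨n, hn⟩ := hx
  exact ⟨n, by rw [← mul_apply_eq_comp, ← pow_succ, pow_succ', mul_apply_eq_comp, hn, map_zero]⟩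

lemma map_mem_rootSpace {ν : ℂ} {x : H} (hx : x ∈ rootSpace T ν) :
    (ν • (1 : H →L[ℂ] H) - T) x ∈ rootSpace T ν := by
  by_cases hν : ν = 0
  · rw [rootSpace, if_pos hν, Submodule.mem_bot] at hx ⊢
    rw [hx, map_zero]
  · rw [rootSpace_of_ne hν] at hx ⊢
    exact map_mem_algEigenspace hx

lemma apply_mem_rootSpace {ν : ℂ} {x : H} (hx : x ∈ rootSpace T ν) : T x ∈ rootSpace T ν := by
  have h : T x = ν • x - (ν • (1 : H →L[ℂ] H) - T) x := by simp
  rw [h]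
  exact Submodule.sub_mem _ (Submodule.smul_mem _ _ hx) (map_mem_rootSpace hx)

lemma apply_mem_below {ν : ℂ} {x : H} (hx : x ∈ below (rootSpace T) ν) :
    T x ∈ below (rootSpace T) ν := by
  have : below (rootSpace T) ν ≤ (below (rootSpace T) ν).comap (T : H →ₗ[ℂ] H) :=
    below_le (isClosed_below.preimage T.continuous) fun κ hκ x hx =>
      le_below hκ (apply_mem_rootSpace hx)
  exact this hx

/-- The polynomials `(κ - X) ^ k` and `(ν - X) ^ N` are coprime, so a vector killed by `(κ - T) ^ k`
lies in the range of `(ν - T) ^ N`. -/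
lemma algEigenspace_le_range {ν κ : ℂ} (h : κ ≠ ν) (N : ℕ) :
    algEigenspace T κ ≤ ((ν • (1 : H →L[ℂ] H) - T) ^ N).range := by
  intro x hx
  obtain ⟨k, hk⟩ := (mem_algEigenspace T κ x).1 hx
  have hco : IsCoprime ((Polynomial.C κ - Polynomial.X) ^ k)
      ((Polynomial.C ν - Polynomial.X : Polynomial ℂ) ^ N) := by
    apply IsCoprime.pow
    have := (Polynomial.isCoprime_X_sub_C_of_isUnit_sub (sub_ne_zero.2 h).isUnit).neg_neg
    simpa using this
  obtain ⟨a, b, hab⟩ := hco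
  have h1 := congrArg (fun p => Polynomial.aeval T p x) hab
  rw [mul_comm b] at h1
  simp only [map_add, map_mul, map_pow, map_sub, Polynomial.aeval_C, Polynomial.aeval_X,
    Algebra.algebraMap_eq_smul_one, add_apply, mul_apply_eq_comp, hk, map_zero, zero_add,
    map_one, one_apply_eq_self] at h1
  exact ⟨_, h1⟩

lemma finiteDimensional_rootSpace (hT : IsCompactOperator T) (ν : ℂ) :
    FiniteDimensional ℂ (rootSpace T ν) := by
  by_cases hν : ν = 0
  · rw [rootSpace, if_pos hν]; infer_instance
  · obtain ⟨N, B, -, h, hf, -⟩ := riesz hT hν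
    rw [rootSpace_of_ne hν, h]
    exact hf

/-- The range in the Riesz decomposition at `ν` is closed and contains every other root space, hence
contains `below ν`, while it meets the root space at `ν` trivially. -/
lemma disjoint_rootSpace_below (hT : IsCompactOperator T) (ν : ℂ) :
    Disjoint (rootSpace T ν) (below (rootSpace T) ν) := by
  by_cases hν : ν = 0
  · rw [rootSpace, if_pos hν]; exact disjoint_bot_left
  · obtain ⟨N, B, hB, h, -, hcl, hdis, -⟩ := riesz hT hν
    rw [rootSpace_of_ne hν, h]
    refine hdis.mono_right (below_le hcl fun κ hκ => ?_)
    have hne : κ ≠ ν := fun h => irrefl_of WellOrderingRel ν (h ▸ hκ)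
    by_cases hκ0 : κ = 0
    · rw [rootSpace, if_pos hκ0]; exact bot_le
    · rw [rootSpace_of_ne hκ0, hB]
      exact algEigenspace_le_range hne _

lemma exists_eigenvector {ν : ℂ} (h : algEigenspace T ν ≠ ⊥) :
    ∃ x ∈ algEigenspace T ν, x ≠ 0 ∧ T x = ν • x := by
  classical
  obtain ⟨y, hy, hy0⟩ := Submodule.exists_mem_ne_zero_of_ne_bot h
  have hex := (mem_algEigenspace T ν y).1 hy
  obtain ⟨k, hk⟩ : ∃ k, Nat.find hex = k + 1 := by
    refine Nat.exists_eq_succ_of_ne_zero fun h0 => hy0 ?_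
    have := Nat.find_spec hex
    rw [h0] at this
    simpa using this
  have h1 := Nat.find_spec hex
  rw [hk, pow_succ', mul_apply_eq_comp] at h1
  refine ⟨_, ?_, Nat.find_min hex (m := k) (by omega), ?_⟩
  · exact (mem_algEigenspace _ _ _).2 ⟨1, by rwa [pow_one]⟩
  · exact (sub_eq_zero.1 h1).symm

/-- The eigenvalues of `T` accumulate only at zero: orthogonalizing an eigenvector for each
eigenvalue against the preceding root spaces gives an orthonormal family whose diagonal entries are
the eigenvalues. -/
lemma finite_layers (hT : IsCompactOperator T) {ε : ℝ} (hε : 0 < ε) :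
    {ν : ℂ | ε ≤ ‖ν‖ ∧ layer (rootSpace T) ν ≠ ⊥}.Finite := by
  by_contra hinf
  set S := {ν : ℂ | ε ≤ ‖ν‖ ∧ layer (rootSpace T) ν ≠ ⊥}
  have hS : S.Infinite := hinf
  have hex : ∀ ν : S, ∃ g : H, ‖g‖ = 1 ∧ g ∈ (below (rootSpace T) ν)ᗮ ∧
      g ∈ below (rootSpace T) ν ⊔ rootSpace T ν ∧ ⟪g, T g⟫_ℂ = ν := by
    rintro ⟨ν, hν, hl⟩
    have hν0 : ν ≠ 0 := norm_pos_iff.1 (hε.trans_le hν)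
    have hM : algEigenspace T ν ≠ ⊥ := fun h => hl (by
      rw [layer, rootSpace_of_ne hν0, h, Submodule.map_bot])
    obtain ⟨x, hx, hx0, hTx⟩ := exists_eigenvector hM
    rw [← rootSpace_of_ne hν0] at hx
    have hxb : x ∉ below (rootSpace T) ν := fun h =>
      hx0 (Submodule.disjoint_def.1 (disjoint_rootSpace_below hT ν) x hx h)
    obtain ⟨g, h1, h2, h3, h4⟩ := exists_unit_diag T ν (below (rootSpace T) ν)
      (fun v hv => apply_mem_below hv) hxb (by rw [hTx, sub_self]; exact Submodule.zero_mem _)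
    have hle : below (rootSpace T) ν ⊔ Submodule.span ℂ {x} ≤
        below (rootSpace T) ν ⊔ rootSpace T ν :=
      sup_le_sup_left ((Submodule.span_singleton_le_iff_mem _ _).2 hx) _
    exact ⟨g, h1, h2, hle h3, h4⟩
  choose g h1 h2 h3 h4 using hex
  have hlt : ∀ κ ν : S, WellOrderingRel (κ : ℂ) ν → ⟪g κ, g ν⟫_ℂ = 0 := by
    intro κ ν h
    have hle : below (rootSpace T) κ ⊔ rootSpace T κ ≤ below (rootSpace T) ν :=
      sup_le (below_mono h) (le_below h)
    exact Submodule.inner_right_of_mem_orthogonal (hle (h3 κ)) (h2 ν)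
  let f := hS.natEmbedding
  refine orthonormal_diag_false hT hε (g := fun n => g (f n)) ⟨fun n => h1 _, ?_⟩
    (fun n => by rw [h4]; exact (f n).2.1)
  intro m n hmn
  rcases trichotomous_of WellOrderingRel (f m : ℂ) (f n) with h | h | h
  · exact hlt _ _ h
  · exact absurd (f.injective (Subtype.ext h)) hmn
  · rw [inner_eq_zero_symm]; exact hlt _ _ h

/-- A nonzero spectral value `μ` of a compact operator admits an eigenvector of the adjoint at
`conj μ`, expressed through inner products. -/
lemma exists_left_eigenvector {Q : H →L[ℂ] H} (hQ : IsCompactOperator Q) {μ : ℂ} (hμ : μ ≠ 0)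
    (h : μ ∈ spectrum ℂ Q) : ∃ y : H, y ≠ 0 ∧ ∀ x, ⟪y, Q x⟫_ℂ = μ * ⟪y, x⟫_ℂ := by
  classical
  obtain ⟨N, B, hB, -, -, hcl, hdis, -⟩ := riesz hQ hμ
  set A := μ • (1 : H →L[ℂ] H) - Q with hA
  -- If `B` were onto, the Riesz decomposition would make it injective, and `μ` would not be an
  -- eigenvalue.
  have htop : B.range ≠ ⊤ := by
    intro htop
    rw [htop, disjoint_top] at hdis
    obtain ⟨v, hv⟩ := ((hQ.hasEigenvalue_iff_mem_spectrum hμ).2 h).exists_hasEigenvector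
    have hAv : A v = 0 := by
      have : Q v = μ • v := hv.apply_eq_smul
      simp [hA, this]
    have : v ∈ B.ker := by
      change B v = 0
      rw [hB, pow_succ, mul_apply_eq_comp, hAv, map_zero]
    rw [hdis] at this
    exact hv.2 this
  have : CompleteSpace B.range := hcl.completeSpace_coe
  obtain ⟨y, hy, hy0⟩ := Submodule.exists_mem_ne_zero_of_ne_bot
    (mt Submodule.orthogonal_eq_bot_iff.1 htop)
  -- If `k + 1` is the least power annihilated by `y` in this sense, `(A ^ k)† y` is the wanted vector.
  have hex : ∃ n, ∀ x, ⟪y, (A ^ n) x⟫_ℂ = 0 :=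
    ⟨N + 1, fun x => by
      rw [← hB]
      exact Submodule.inner_left_of_mem_orthogonal (K := B.range) ⟨x, rfl⟩ hy⟩
  obtain ⟨k, hk⟩ : ∃ k, Nat.find hex = k + 1 := by
    refine Nat.exists_eq_succ_of_ne_zero fun h0 => hy0 ?_
    have := Nat.find_spec hex y
    rw [h0] at this
    simpa using this
  have h1 := Nat.find_spec hex
  have h2 := Nat.find_min hex (m := k) (by omega)
  rw [hk] at h1
  refine ⟨ContinuousLinearMap.adjoint (A ^ k) y, fun h0 => h2 fun x => ?_, fun x => ?_⟩
  · rw [← ContinuousLinearMap.adjoint_inner_left, h0, inner_zero_left]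
  · have h3 := h1 x
    rw [pow_succ, mul_apply_eq_comp, ← ContinuousLinearMap.adjoint_inner_left] at h3
    simp only [hA, sub_apply, smul_apply, one_apply_eq_self, inner_sub_right,
      inner_smul_right] at h3
    exact (sub_eq_zero.1 h3).symm

/-- `T - D` has no left eigenvector at `μ ≠ 0` when `D` acts as the scalar `ν` on the layer at `ν` and
has range orthogonal to every vector that is orthogonal to all layers. -/
lemma left_eigenvector_eq_zero (hT : IsCompactOperator T) {μ : ℂ} (hμ : μ ≠ 0) {D : H →L[ℂ] H}
    (hD : ∀ ν, ∀ x ∈ layer (rootSpace T) ν, D x = ν • x)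
    (hD0 : ∀ y, (∀ ν, y ∈ (layer (rootSpace T) ν)ᗮ) → ∀ x, ⟪y, D x⟫_ℂ = 0)
    {y : H} (hy : ∀ x, ⟪y, (T - D) x⟫_ℂ = μ * ⟪y, x⟫_ℂ) : y = 0 := by
  have horth : ∀ ν, y ∈ (rootSpace T ν)ᗮ := by
    intro ν
    induction ν using (IsWellFounded.wf : WellFounded (WellOrderingRel (α := ℂ))).induction with
    | _ ν ih =>
    have hb := mem_orthogonal_below ih
    -- Modulo `below ν`, the operators `D` and `ν` agree on the root space at `ν`; so there `y` is a
    -- left eigenvector of the locally nilpotent `ν - T`, at the nonzero value `-μ`.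
    have hstep : ∀ m ∈ rootSpace T ν,
        ⟪y, (ν • (1 : H →L[ℂ] H) - T) m⟫_ℂ = -μ * ⟪y, m⟫_ℂ := by
      intro m hm
      obtain ⟨e, he, hme⟩ := exists_sub_mem_layer hm
      have h1 := hy (m - e)
      have he0 : ⟪y, e⟫_ℂ = 0 := Submodule.inner_left_of_mem_orthogonal he hb
      have hTe0 : ⟪y, T e⟫_ℂ = 0 :=
        Submodule.inner_left_of_mem_orthogonal (apply_mem_below he) hb
      rw [sub_apply, hD ν _ hme] at h1
      simp only [map_sub, inner_sub_right, inner_smul_right, he0, hTe0, sub_zero] at h1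
      simp only [sub_apply, smul_apply, one_apply_eq_self, inner_sub_right, inner_smul_right]
      linear_combination -h1
    have hpow : ∀ n : ℕ, ∀ m ∈ rootSpace T ν,
        ⟪y, ((ν • (1 : H →L[ℂ] H) - T) ^ n) m⟫_ℂ = (-μ) ^ n * ⟪y, m⟫_ℂ := by
      intro n
      induction n with
      | zero => intro m _; simp
      | succ n ihn =>
        intro m hm
        rw [pow_succ, mul_apply_eq_comp, ihn _ (map_mem_rootSpace hm), hstep m hm, pow_succ,
          mul_assoc]
    intro m hm
    rw [inner_eq_zero_symm]
    by_cases hν : ν = 0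
    · rw [rootSpace, if_pos hν, Submodule.mem_bot] at hm
      rw [hm, inner_zero_right]
    · have hm' := hm
      rw [rootSpace_of_ne hν, mem_algEigenspace] at hm'
      obtain ⟨n, hn⟩ := hm'
      have h1 := hpow n m hm
      rw [hn, inner_zero_right] at h1
      exact (mul_eq_zero.1 h1.symm).resolve_left (pow_ne_zero _ (neg_ne_zero.2 hμ))
  -- Now `D` is invisible to `y`, so `y` is orthogonal to the range of `μ - T` and to the root space
  -- at `μ`; by the Riesz decomposition these span everything.
  have hDy := hD0 y fun ν => mem_orthogonal_layer horth
  have hA : ∀ x, ⟪y, (μ • (1 : H →L[ℂ] H) - T) x⟫_ℂ = 0 := by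
    intro x
    have h1 := hy x
    rw [sub_apply, inner_sub_right, hDy, sub_zero] at h1
    change ⟪y, μ • x - T x⟫_ℂ = 0
    rw [inner_sub_right, h1, inner_smul_right, sub_self]
  obtain ⟨N, B, hB, hk, -, -, -, htop⟩ := riesz hT hμ
  have hle : B.ker ⊔ B.range ≤ (Submodule.span ℂ {y})ᗮ := by
    refine sup_le (fun x hx => ?_) ?_
    · rw [Submodule.mem_orthogonal_singleton_iff_inner_left]
      rw [← hk, ← rootSpace_of_ne hμ] at hx
      exact horth μ x hx
    · rintro _ ⟨x, rfl⟩
      rw [Submodule.mem_orthogonal_singleton_iff_inner_right]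
      change ⟪y, B x⟫_ℂ = 0
      rw [hB, pow_succ', mul_apply_eq_comp]
      exact hA _
  rw [htop] at hle
  have := hle (Submodule.mem_top (x := y))
  rwa [Submodule.mem_orthogonal_singleton_iff_inner_left, inner_self_eq_zero] at this

end Final

end SchurDecomp

/-- Every compact operator `T` on an infinite-dimensional complex Hilbert space can be
written as `T = D + Q` with `D` normal compact, having the same nonzero eigenvalues with
the same algebraic multiplicities as `T`, and `Q` quasi-nilpotent compact. -/
theorem stmt10 {H : Type*} [NormedAddCommGroup H] [InnerProductSpace ℂ H] [CompleteSpace H]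
    (hH : ¬ FiniteDimensional ℂ H)
    (T : H →L[ℂ] H) (hT : IsCompactOperator T) :
    ∃ D Q : H →L[ℂ] H, T = D + Q ∧
      IsCompactOperator D ∧ IsStarNormal D ∧
      IsCompactOperator Q ∧ spectralRadius ℂ Q = 0 ∧
      ∀ μ : ℂ, μ ≠ 0 →
        Module.finrank ℂ (algEigenspace D μ) = Module.finrank ℂ (algEigenspace T μ) := by
  have := SchurDecomp.finiteDimensional_rootSpace hT
  have hG : ∀ κ ν, κ ≠ ν → ∀ x ∈ SchurDecomp.layer (SchurDecomp.rootSpace T) κ,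
      ∀ y ∈ SchurDecomp.layer (SchurDecomp.rootSpace T) ν, inner ℂ x y = 0 :=
    fun κ ν h x hx y hy => SchurDecomp.inner_layer h hx hy
  have hfin := fun ε (hε : ε > 0) => SchurDecomp.finite_layers hT hε
  have hDc := SchurDecomp.isCompactOperator_diag hG hfin
  set D := SchurDecomp.diag (SchurDecomp.layer (SchurDecomp.rootSpace T)) with hD
  have hQ : IsCompactOperator (T - D : H →L[ℂ] H) := hT.sub hDc
  refine ⟨D, T - D, by abel, hDc, SchurDecomp.isStarNormal_diag hG hfin, hQ, ?_, fun μ hμ => ?_⟩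
  · have hz : ∀ μ ∈ spectrum ℂ (T - D), μ = 0 := by
      intro μ h
      by_contra hμ
      obtain ⟨y, hy0, hy⟩ := SchurDecomp.exists_left_eigenvector hQ hμ h
      exact hy0 (SchurDecomp.left_eigenvector_eq_zero hT hμ
        (fun ν x hx => SchurDecomp.diag_apply_of_mem hG hfin hx)
        (fun y hy x => SchurDecomp.inner_diag_of_orthogonal hG hfin hy x) hy)
    rw [spectralRadius]
    simp only [ENNReal.iSup_eq_zero]
    intro μ h
    simp [hz μ h]
  · rw [hD, SchurDecomp.algEigenspace_diag hG hfin hμ,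
      SchurDecomp.finrank_layer (SchurDecomp.disjoint_rootSpace_below hT μ),
      SchurDecomp.rootSpace_of_ne hμ]
end

section
/- Let T be a compact operator on an infinite-dimensional Hilbert space, let λ, μ be distinct nonzero elements of σ(T), and P_λ the orthogonal projection onto E_λ(T) = ⋃_n ker(λ − T)^n. If ζ ∈ (1 − P_λ)H is nonzero with (1 − P_λ) T ζ = μ ζ, then μ ∈ σ(T). -/
/-- For `μ ≠ l`, every vector of the algebraic eigenspace for `l` has a preimage there under
`T - μ`: with `N = l - T`, which is nilpotent on each `ker (N ^ n)`, one has
`T - μ = (l - μ) - N`, inverted there by a finite Neumann series. -/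
theorem algEigenspace_le_map {H : Type*} [NormedAddCommGroup H] [InnerProductSpace ℂ H]
    (T : H →L[ℂ] H) {l μ : ℂ} (h : μ ≠ l) :
    algEigenspace T l ≤
      (algEigenspace T l).map ((T : H →ₗ[ℂ] H) - μ • (1 : Module.End ℂ H)) := by
  have hc : l - μ ≠ 0 := sub_ne_zero.mpr h.symm
  refine iSup_le fun n => ?_
  induction n with
  | zero =>
    intro x hx
    have hx0 : x = 0 := by simpa using hx
    simp [hx0]
  | succ n ih =>
    intro x hx
    have hNx : l • x - T x ∈
        LinearMap.ker ((l • (1 : Module.End ℂ H) - (T : H →ₗ[ℂ] H)) ^ n) := by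
      simpa [pow_succ] using hx
    obtain ⟨e, he, hex⟩ := ih hNx
    have hxE : x ∈ algEigenspace T l := Submodule.mem_iSup_of_mem (n + 1) hx
    refine ⟨(l - μ)⁻¹ • (x + e), Submodule.smul_mem _ _ (Submodule.add_mem _ hxE he), ?_⟩
    have hex' : T e - μ • e = l • x - T x := by simpa using hex
    have key : T x + T e - μ • (x + e) = (l - μ) • x := by
      linear_combination (norm := module) hex'
    rw [map_smul, inv_smul_eq_iff₀ hc]
    simpa using key

/-- If `T` is compact on an infinite-dimensional Hilbert space, `λ ≠ μ` are nonzero with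
`λ ∈ σ(T)`, `P_λ` the orthogonal projection onto `E_λ(T)`, and `ζ ∈ (1−P_λ)H` is nonzero
with `(1−P_λ) T ζ = μ ζ`, then `μ ∈ σ(T)`. -/
theorem stmt18 {H : Type*} [NormedAddCommGroup H] [InnerProductSpace ℂ H] [CompleteSpace H]
    (hH : ¬ FiniteDimensional ℂ H)
    (T : H →L[ℂ] H) (hT : IsCompactOperator T)
    (l μ : ℂ) (hl : l ∈ spectrum ℂ T) (hl0 : l ≠ 0) (hμ0 : μ ≠ 0) (hlμ : μ ≠ l)
    (P : H →L[ℂ] H) (hPsa : IsSelfAdjoint P) (hPidem : P * P = P)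
    (hPrange : LinearMap.range (P : H →ₗ[ℂ] H) = algEigenspace T l)
    (ζ : H) (hζ0 : ζ ≠ 0) (hζmem : P ζ = 0)
    (hev : (1 - P) (T ζ) = μ • ζ) :
    μ ∈ spectrum ℂ T := by
  have hPT : P (T ζ) ∈ algEigenspace T l := hPrange ▸ ⟨T ζ, rfl⟩
  obtain ⟨e, he, hex⟩ := algEigenspace_le_map T hlμ hPT
  have hex' : T e - μ • e = P (T ζ) := by simpa using hex
  have hev' : T ζ - P (T ζ) = μ • ζ := by simpa using hev
  have hker : μ • (ζ - e) - T (ζ - e) = 0 := by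
    rw [map_sub]
    linear_combination (norm := module) hex' - hev'
  rw [spectrum.mem_iff]
  intro hu
  obtain ⟨S, hS⟩ := hu.exists_left_inv
  have hζe : ζ = e := by
    have h1 := congrArg (fun A : H →L[ℂ] H => A (ζ - e)) hS
    have h2 : (algebraMap ℂ (H →L[ℂ] H) μ - T) (ζ - e) = 0 := by
      simpa [Algebra.algebraMap_eq_smul_one] using hker
    simp only [mul_apply_eq_comp, h2, map_zero, one_apply_eq_self] at h1
    exact sub_eq_zero.mp h1.symm
  rw [← hPrange] at he
  obtain ⟨y, hy⟩ := he
  have hy' : P y = ζ := hζe ▸ hy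
  apply hζ0
  have h3 : P (P y) = P y := congrArg (fun A : H →L[ℂ] H => A y) hPidem
  rw [← hy', ← h3, hy', hζmem]
end
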